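/- There do not exist probability distributions P_λ on {0,1}, and conditional probabilities P_{A,λ}(a|x), P_{B,λ}(b|y) for a,b,x,y,λ ∈ {0,1}, such that the box P(ab|xy) = Σ_λ P_λ(λ) P_{A,λ}(a|x) P_{B,λ}(b|y) equals the noisy PR box with parameter p > 0. That is, the noisy PR box with p > 0 cannot be simulated by a local hidden variable model with a binary shared variable. -/

import Mathlib

open Finset Real

noncomputable section

/-- A two-input two-output box: `P a b x y` is the probability of outputs `a, b`
given inputs `x, y`. -/
abbrev Box := Fin 2 → Fin 2 → Fin 2 → Fin 2 → ℝ

/-- The correlator `⟨A_x B_y⟩`. -/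
def corr (P : Box) (x y : Fin 2) : ℝ :=
  ∑ a : Fin 2, ∑ b : Fin 2, (-1 : ℝ) ^ ((a : ℕ) + (b : ℕ)) * P a b x y

/-- Alice's marginal expectation `⟨A_x⟩` (computed with Bob's input `y`). -/
def margA (P : Box) (x y : Fin 2) : ℝ :=
  ∑ a : Fin 2, ∑ b : Fin 2, (-1 : ℝ) ^ ((a : ℕ)) * P a b x y

/-- Bob's marginal expectation `⟨B_y⟩` (computed with Alice's input `x`). -/
def margB (P : Box) (x y : Fin 2) : ℝ :=
  ∑ a : Fin 2, ∑ b : Fin 2, (-1 : ℝ) ^ ((b : ℕ)) * P a b x y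

/-- The absolute CHSH expression `B_{2α+β}`. -/
def bell (P : Box) (α β : Fin 2) : ℝ :=
  |corr P 0 0 + (-1 : ℝ) ^ (β : ℕ) * corr P 0 1 + (-1 : ℝ) ^ (α : ℕ) * corr P 1 0
    + (-1 : ℝ) ^ ((α : ℕ) + (β : ℕ) + 1) * corr P 1 1|

/-- Bell strength `Γ`. -/
def gammaStrength (P : Box) : ℝ :=
  min (|(|bell P 0 0 - bell P 0 1|) - (|bell P 1 0 - bell P 1 1|)|)
    (min (|(|bell P 0 0 - bell P 1 0|) - (|bell P 0 1 - bell P 1 1|)|)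
      (|(|bell P 0 0 - bell P 1 1|) - (|bell P 0 1 - bell P 1 0|)|))

/-- Valid box: nonnegative and normalized. -/
def IsBox (P : Box) : Prop :=
  (∀ a b x y, 0 ≤ P a b x y) ∧ ∀ x y, ∑ a : Fin 2, ∑ b : Fin 2, P a b x y = 1

/-- Nonsignaling condition. -/
def NonSignaling (P : Box) : Prop :=
  (∀ a x y y', ∑ b : Fin 2, P a b x y = ∑ b : Fin 2, P a b x y') ∧
  (∀ b x x' y, ∑ a : Fin 2, P a b x y = ∑ a : Fin 2, P a b x' y)

/-- The noisy PR box `p·P_PR + (1-p)·P_N`. -/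
def noisyPR (p : ℝ) : Box := fun a b x y =>
  (1 + (-1 : ℝ) ^ ((a : ℕ) + (b : ℕ) + (x : ℕ) * (y : ℕ)) * p) / 4

/-- The PR box `P_PR^{αβγ}` (addition/multiplication in `Fin 2` is mod 2). -/
def PRbox (α β γ : Fin 2) : Box := fun a b x y =>
  if a + b = x * y + α * x + β * y + γ then 1 / 2 else 0

/-- The local deterministic box `P_D^{αβγε}`. -/
def detBox (α β γ ε : Fin 2) : Box := fun a b x y =>
  if a = α * x + β ∧ b = γ * y + ε then 1 else 0

/-! Pairing each output with its input turns a box into a matrix indexed by `(a, x)` and `(b, y)`.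
Every value of the hidden variable contributes a matrix of rank at most one, so a model with `k`
hidden values has a matrix of rank at most `k`. The noisy PR box has the matrix
`(J + p s sᵀ ⊗ H) / 4`, where `J` is the all-ones matrix, `s = (1, -1)` is the output sign and
`H x y = (-1) ^ (x * y)` is an invertible `2 × 2` Hadamard matrix. As `s` is orthogonal to `(1, 1)`,
the rank is `1 + 2 = 3` as soon as `p ≠ 0`; this is visible on a `3 × 3` minor. -/

section Rank

variable {m n : Type*} [Fintype n]

theorem rank_le_card_of_eq_sum_mul {R Λ : Type*} [CommSemiring R] [StrongRankCondition R]
    [Fintype Λ] {M : Matrix m n R} (u : Λ → m → R) (v : Λ → n → R)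
    (hM : ∀ i j, M i j = ∑ l, u l i * v l j) : M.rank ≤ Fintype.card Λ := by
  have hfactor : M = (Matrix.of u).transpose * Matrix.of v := Matrix.ext hM
  calc M.rank ≤ (Matrix.of u).transpose.rank := hfactor ▸ Matrix.rank_mul_le_left _ _
    _ ≤ Fintype.card Λ := Matrix.rank_le_card_width _

theorem card_le_rank_of_isUnit_det_submatrix {R k : Type*} [CommRing R] [StrongRankCondition R]
    [Fintype k] [DecidableEq k] {M : Matrix m n R} (r : k → m) (c : k → n)
    (h : IsUnit (M.submatrix r c).det) : Fintype.card k ≤ M.rank :=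
  calc Fintype.card k = (M.submatrix r c).rank :=
        (Matrix.rank_of_isUnit _ ((Matrix.isUnit_iff_isUnit_det _).mpr h)).symm
    _ ≤ M.rank := Matrix.rank_submatrix_le M r c

end Rank

/-- The matrix of a box: rows are Alice's (output, input) pairs `(a, x)`, columns are Bob's pairs
`(b, y)`. Its rank bounds from below the dimension of a hidden variable model. -/
def Box.toMatrix (P : Box) : Matrix (Fin 2 × Fin 2) (Fin 2 × Fin 2) ℝ :=
  Matrix.of fun i j => P i.1 j.1 i.2 j.2

theorem Box.rank_toMatrix_le_card {P : Box} {Λ : Type*} [Fintype Λ] (q : Λ → ℝ)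
    (PA PB : Λ → Fin 2 → Fin 2 → ℝ)
    (hP : ∀ a b x y, ∑ l, q l * PA l a x * PB l b y = P a b x y) :
    P.toMatrix.rank ≤ Fintype.card Λ :=
  rank_le_card_of_eq_sum_mul (fun l i => q l * PA l i.1 i.2) (fun l j => PB l j.1 j.2)
    fun i j => (hP i.1 j.1 i.2 j.2).symm

theorem det_noisyPR_toMatrix_submatrix (p : ℝ) :
    ((noisyPR p).toMatrix.submatrix ![(0, 0), (1, 0), (0, 1)] ![(0, 0), (1, 0), (0, 1)]).det
      = -(p ^ 2 / 8) := by
  have hentries :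
      (noisyPR p).toMatrix.submatrix ![(0, 0), (1, 0), (0, 1)] ![(0, 0), (1, 0), (0, 1)] =
        !![(1 + p) / 4, (1 - p) / 4, (1 + p) / 4;
           (1 - p) / 4, (1 + p) / 4, (1 - p) / 4;
           (1 + p) / 4, (1 - p) / 4, (1 - p) / 4] := by
    ext i j
    fin_cases i <;> fin_cases j <;> simp [Box.toMatrix, noisyPR, sub_eq_add_neg]
  rw [hentries, Matrix.det_fin_three]
  simp only [Matrix.of_apply, Matrix.cons_val]
  ring

theorem three_le_rank_noisyPR_toMatrix {p : ℝ} (hp : p ≠ 0) : 3 ≤ (noisyPR p).toMatrix.rank := by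
  have hdet : -(p ^ 2 / 8) ≠ 0 := by simpa using hp
  exact (Fintype.card_fin 3).symm.trans_le <|
    card_le_rank_of_isUnit_det_submatrix _ _ (det_noisyPR_toMatrix_submatrix p ▸ hdet.isUnit)

theorem noisyPR_not_binary_LHV_general {p : ℝ} (hp : p ≠ 0) {Λ : Type*} [Fintype Λ]
    (q : Λ → ℝ) (PA PB : Λ → Fin 2 → Fin 2 → ℝ)
    (h : ∀ a b x y, ∑ l, q l * PA l a x * PB l b y = noisyPR p a b x y) :
    3 ≤ Fintype.card Λ :=
  (three_le_rank_noisyPR_toMatrix hp).trans (Box.rank_toMatrix_le_card q PA PB h)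

/-- The noisy PR box with `p > 0` cannot be simulated by a local
hidden variable model with a binary shared variable. -/
theorem noisyPR_not_binary_LHV (p : ℝ) (hp : 0 < p) :
    ¬ ∃ (q : Fin 2 → ℝ) (PA PB : Fin 2 → Fin 2 → Fin 2 → ℝ),
      (∀ l, 0 ≤ q l) ∧ (∑ l : Fin 2, q l = 1) ∧
      (∀ l a x, 0 ≤ PA l a x) ∧ (∀ l x, ∑ a : Fin 2, PA l a x = 1) ∧
      (∀ l b y, 0 ≤ PB l b y) ∧ (∀ l y, ∑ b : Fin 2, PB l b y = 1) ∧
      (∀ a b x y, (∑ l : Fin 2, q l * PA l a x * PB l b y) = noisyPR p a b x y) := by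
  rintro ⟨q, PA, PB, -, -, -, -, -, -, h⟩
  exact absurd (noisyPR_not_binary_LHV_general hp.ne' q PA PB h) (by simp)
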